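/- arXiv:1709.05685 — 2 statements merged into one kernel-verified Lean document; each statement's English description precedes it below -/
import Mathlib

section
/- Let Y be an m×n matrix with entries in a commutative ring such that all t×t minors of Y vanish. Then for any row indices a_1,...,a_{t-1}, c_1,...,c_{t-1} and column indices b_1,...,b_{t-1}, d_1,...,d_{t-1}, the product of the (t-1)-minor of Y with rows a_1,...,a_{t-1} and columns b_1,...,b_{t-1} with the (t-1)-minor with rows c_1,...,c_{t-1} and columns d_1,...,d_{t-1} equals the product of the (t-1)-minor with rows a_1,...,a_{t-1}, columns d_1,...,d_{t-1} with the (t-1)-minor with rows c_1,...,c_{t-1}, columns b_1,...,b_{t-1}. -/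
open Matrix

/-!
Stack the rows `c` of `Y` on top of a second matrix `W`, both over the columns `d` followed by the
columns `b`. Adding a row of `Y` to a row of `W` does not change the determinant of the stack: the
difference is a determinant with `t` rows coming from `Y`, which vanishes by expansion along the
remaining rows. Adding the rows `a` to the lower half of `[Y_cd, Y_cb; -Y_ad, 0]` turns it into
`[Y_cd, Y_cb; 0, Y_ab]`, and the two determinants are the two sides of the identity.
-/

theorem multilinearMap_eq_of_update_sub_eq_zero {R ι M N : Type*} [Semiring R] [Finite ι]
    [DecidableEq ι] [AddCommGroup M] [Module R M] [AddCommGroup N] [Module R N]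
    (φ : MultilinearMap R (fun _ : ι => M) N) (v w : ι → M)
    (h : ∀ u i, φ (Function.update u i (v i - w i)) = 0) : φ v = φ w := by
  cases nonempty_fintype ι
  suffices hs : ∀ s : Finset ι, φ (s.piecewise v w) = φ w by simpa using hs Finset.univ
  intro s
  induction s using Finset.induction_on with
  | empty => rw [Finset.piecewise_empty]
  | insert i s hi ih =>
    have hw : Function.update (s.piecewise v w) i (w i) = s.piecewise v w := by simp [hi]
    have hdiff := h (s.piecewise v w) i
    rwa [φ.map_update_sub, ← Finset.piecewise_insert, hw, ih, sub_eq_zero] at hdiff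

section Determinants

variable {R m n ι : Type*} [CommRing R] [Fintype ι] [DecidableEq ι]

theorem det_submatrix_eq_zero_of_comp_succ {k : ℕ} (M : Matrix m n R) (f : Fin (k + 1) → m)
    (h : ∀ g : Fin k → n, (M.submatrix (f ∘ Fin.succ) g).det = 0) (g : Fin (k + 1) → n) :
    (M.submatrix f g).det = 0 := by
  rw [det_succ_row_zero]
  refine Finset.sum_eq_zero fun j _ => ?_
  have hminor : (M.submatrix (f ∘ Fin.succ) (g ∘ j.succAbove)).det = 0 := h _
  rw [submatrix_submatrix, hminor, mul_zero]

theorem det_eq_zero_of_forall_det_submatrix_eq_zero {k : ℕ} (M : Matrix ι ι R) (f : Fin k ↪ ι)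
    (h : ∀ g : Fin k → ι, (M.submatrix f g).det = 0) : M.det = 0 := by
  induction hr : Fintype.card ι - k generalizing k with
  | zero =>
    have hf : Function.Bijective f :=
      f.injective.bijective_of_nat_card_le (by simpa using Nat.sub_eq_zero_iff_le.mp hr)
    let e : Fin k ≃ ι := Equiv.ofBijective f hf
    rw [← det_submatrix_equiv_self e]
    exact h e
  | succ r ih =>
    obtain ⟨i, hi⟩ : ∃ i, i ∉ Set.range f := by
      by_contra! hsurj
      have hcard := Fintype.card_le_of_surjective f hsurj
      rw [Fintype.card_fin] at hcard
      omega
    refine ih (Fin.Embedding.cons f hi) ?_ (by omega)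
    exact det_submatrix_eq_zero_of_comp_succ M _ h

theorem det_fromBlocks_zero₂₂ (A B C : Matrix ι ι R) :
    (fromBlocks A B C 0).det = B.det * (-C).det := by
  have hJ : (J ι R).det = 1 := SymplecticGroup.det_eq_one (SymplecticGroup.J_mem ι R)
  calc
    (fromBlocks A B C 0).det = (fromBlocks A B C 0 * J ι R).det := by rw [det_mul, hJ, mul_one]
    _ = (fromBlocks B (-A) 0 (-C)).det := by simp [J, fromBlocks_multiply]
    _ = B.det * (-C).det := det_fromBlocks_zero₂₁ ..

end Determinants

section VanishingMinors

variable {R m n ι ρ : Type*} [CommRing R] [Fintype ι] [DecidableEq ι] [Fintype ρ] [DecidableEq ρ]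
  {t : ℕ}

theorem det_fromRows_updateRow_eq_zero (ht : t ≤ Fintype.card ι + 1) (Y : Matrix m n R)
    (hY : ∀ (f : Fin t → m) (g : Fin t → n), (Y.submatrix f g).det = 0)
    (c : ι → m) (r : m) (g : ι ⊕ ρ → n) (W : Matrix ρ (ι ⊕ ρ) R) (i : ρ) :
    (fromRows (Y.submatrix c g) (W.updateRow i fun j => Y r (g j))).det = 0 := by
  obtain ⟨e⟩ : Nonempty (Fin t ↪ Option ι) :=
    Function.Embedding.nonempty_of_card_le (by simpa using ht)
  let rows : Option ι ↪ ι ⊕ ρ := Function.Embedding.inl.optionElim (Sum.inr i) (by simp)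
  refine det_eq_zero_of_forall_det_submatrix_eq_zero _ (e.trans rows) fun g' => ?_
  convert hY (fun x => (e x).elim r c) (g ∘ g') using 2
  ext x y
  rcases hx : e x with _ | k <;> simp [rows, hx]

theorem det_fromRows_eq_of_sub_eq_submatrix (ht : t ≤ Fintype.card ι + 1) (Y : Matrix m n R)
    (hY : ∀ (f : Fin t → m) (g : Fin t → n), (Y.submatrix f g).det = 0)
    (c : ι → m) (a : ρ → m) (g : ι ⊕ ρ → n) {V W : Matrix ρ (ι ⊕ ρ) R}
    (hVW : V - W = Y.submatrix a g) :
    (fromRows (Y.submatrix c g) V).det = (fromRows (Y.submatrix c g) W).det := by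
  refine multilinearMap_eq_of_update_sub_eq_zero
    (detRowAlternating.toMultilinearMap.currySum (Y.submatrix c g)) V W fun U i => ?_
  have hrow : V i - W i = fun j => Y (a i) (g j) := congrFun hVW i
  rw [hrow]
  exact det_fromRows_updateRow_eq_zero ht Y hY c (a i) g U i

theorem minor_exchange_general (ht : t ≤ Fintype.card ι + 1) (Y : Matrix m n R)
    (hY : ∀ (f : Fin t → m) (g : Fin t → n), (Y.submatrix f g).det = 0)
    (a c : ι → m) (b d : ι → n) :
    (Y.submatrix a b).det * (Y.submatrix c d).det
      = (Y.submatrix a d).det * (Y.submatrix c b).det := by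
  have hstack (C D : Matrix ι ι R) : fromBlocks (Y.submatrix c d) (Y.submatrix c b) C D =
      fromRows (Y.submatrix c (Sum.elim d b)) (fromCols C D) := by
    ext (i | i) (j | j) <;> rfl
  calc
    _ = (fromBlocks (Y.submatrix c d) (Y.submatrix c b) 0 (Y.submatrix a b)).det := by
      rw [det_fromBlocks_zero₂₁, mul_comm]
    _ = (fromBlocks (Y.submatrix c d) (Y.submatrix c b) (-Y.submatrix a d) 0).det := by
      rw [hstack, hstack]
      refine det_fromRows_eq_of_sub_eq_submatrix ht Y hY c a _ ?_
      ext i (j | j) <;> simp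
    _ = _ := by
      rw [det_fromBlocks_zero₂₂, neg_neg, mul_comm]

end VanishingMinors

/-- If all `t×t` minors of an `m×n` matrix `Y` vanish, then for any choices of `t-1` rows and
columns, `[a|b]·[c|d] = [a|d]·[c|b]` for the corresponding `(t-1)`-minors. -/
theorem minor_exchange {R : Type*} [CommRing R] {m n t : ℕ} (Y : Matrix (Fin m) (Fin n) R)
    (hY : ∀ (f : Fin t → Fin m) (g : Fin t → Fin n), (Y.submatrix f g).det = 0)
    (a c : Fin (t - 1) → Fin m) (b d : Fin (t - 1) → Fin n) :
    (Y.submatrix a b).det * (Y.submatrix c d).det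
      = (Y.submatrix a d).det * (Y.submatrix c b).det :=
  minor_exchange_general (by rw [Fintype.card_fin]; omega) Y hY a c b d
end

section
/- Let F be a field, H the t×n Hankel matrix in indeterminates x_1,...,x_{n+t-1} with t ≤ n, and R = F[x_1,...,x_{n+t-1}]/I_t(H). Then the images of x_1,...,x_{t-1},x_{n+1},...,x_{n+t-1} form a homogeneous system of parameters for R; in particular the quotient of R by the ideal they generate is Artinian of dimension 0, and dim R = 2t-2. -/
open MvPolynomial Matrix

/-!
Write `s = t - 1`. Modulo the parameters, the maximal minors on consecutive columns in reversed
order become triangular one after the other, so every variable is nilpotent. The quotient is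
therefore finite over `F`, and by the graded Nakayama lemma `R` is finite over the subalgebra
generated by the `2 * s` parameters, whence `dim R ≤ 2 * s`.

For the opposite inequality, take a sequence satisfying a linear recurrence of order `s` whose first
`2 * s` terms are algebraically independent: the coefficients of the recurrence exist because the
generic `s × s` Hankel matrix is invertible. The recurrence is a linear relation between the rows
of the `t × n` Hankel matrix of this sequence, so `R` maps to a field in such a way that `2 * s` of
the variables stay algebraically independent.
-/

section KrullDimension

theorem ringKrullDim_le_of_isIntegral (A B : Type*) [CommRing A] [CommRing B] [Algebra A B]
    [Algebra.IsIntegral A B] : ringKrullDim B ≤ ringKrullDim A :=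
  Order.krullDim_le_of_strictMono (PrimeSpectrum.comap (algebraMap A B)) fun p _ hpq =>
    Ideal.IsIntegral.comap_lt_comap (I := p.asIdeal) hpq

theorem ringKrullDim_eq_of_isIntegral (A B : Type*) [CommRing A] [CommRing B] [Algebra A B]
    [FaithfulSMul A B] [Algebra.IsIntegral A B] : ringKrullDim B = ringKrullDim A := by
  refine (ringKrullDim_le_of_isIntegral A B).antisymm (iSup_le fun l => ?_)
  obtain ⟨Q, hQ⟩ := Algebra.IsIntegral.comap_surjective A B l.head
  have : Q.asIdeal.LiesOver l.head.asIdeal := ⟨congrArg PrimeSpectrum.asIdeal hQ.symm⟩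
  obtain ⟨L, hL, -⟩ := Ideal.exists_ltSeries_of_hasGoingUp (S := B) l Q.asIdeal
  exact hL ▸ Order.LTSeries.length_le_krullDim L

theorem ringKrullDim_eq_trdeg (F A : Type*) [Field F] [CommRing A] [IsDomain A] [Algebra F A]
    [Algebra.FiniteType F A] :
    ringKrullDim A = (Cardinal.toENat (Algebra.trdeg F A) : WithBot ℕ∞) := by
  obtain ⟨r, g, hinj, hfin⟩ := exists_finite_inj_algHom_of_fg F A
  algebraize [g.toRingHom]
  have : IsScalarTower F (MvPolynomial (Fin r) F) A := .of_algebraMap_eq' g.comp_algebraMap.symm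
  have : FaithfulSMul (MvPolynomial (Fin r) F) A :=
    (faithfulSMul_iff_algebraMap_injective _ _).mpr hinj
  have : Module.Finite (MvPolynomial (Fin r) F) A := hfin
  have htr : Algebra.trdeg F A = r := by
    rw [← Cardinal.lift_eq_nat_iff, ← lift_trdeg_add_eq F (MvPolynomial (Fin r) F) A]
    simp [trdeg_eq_zero]
  rw [ringKrullDim_eq_of_isIntegral (MvPolynomial (Fin r) F) A, htr,
    MvPolynomial.ringKrullDim_of_isNoetherianRing, ringKrullDim_eq_zero_of_field]
  simp

theorem ringKrullDim_eq_zero_of_isArtinianRing (A : Type*) [CommRing A] [Nontrivial A]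
    [IsArtinianRing A] : ringKrullDim A = 0 :=
  ringKrullDimZero_iff_ringKrullDim_eq_zero.mp (isArtinianRing_iff_krullDimLE_zero.mp ‹_›)

theorem ringKrullDim_le_ncard_of_isIntegral_adjoin {F B : Type*} [Field F] [CommRing B]
    [Algebra F B] {s : Set B} (hs : s.Finite) [Algebra.IsIntegral (Algebra.adjoin F s) B] :
    ringKrullDim B ≤ s.ncard := by
  have : Finite s := hs
  have hsurj : Function.Surjective (aeval (R := F) ((↑) : s → B)).rangeRestrict :=
    AlgHom.rangeRestrict_surjective _
  calc ringKrullDim B ≤ ringKrullDim (Algebra.adjoin F s) := ringKrullDim_le_of_isIntegral _ _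
    _ ≤ ringKrullDim (MvPolynomial s F) := by
      rw [Algebra.adjoin_eq_range]
      exact ringKrullDim_le_of_surjective
        (aeval (R := F) ((↑) : s → B)).rangeRestrict.toRingHom hsurj
    _ = s.ncard := by
      rw [MvPolynomial.ringKrullDim_of_isNoetherianRing, ringKrullDim_eq_zero_of_field, zero_add,
        Nat.card_coe_set_eq]

theorem le_ringKrullDim_of_algebraicIndependent {F A D ι : Type*} [Field F] [CommRing A]
    [Algebra F A] [Algebra.FiniteType F A] [CommRing D] [IsDomain D] [Algebra F D]
    (ψ : A →ₐ[F] D) {w : ι → A} (hw : AlgebraicIndependent F (ψ ∘ w)) :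
    (ENat.card ι : WithBot ℕ∞) ≤ ringKrullDim A := by
  have hw' : AlgebraicIndependent F (ψ.rangeRestrict ∘ w) :=
    AlgebraicIndependent.of_comp ψ.range.val hw
  have : Algebra.FiniteType F ψ.range := .of_surjective _ ψ.rangeRestrict_surjective
  calc (ENat.card ι : WithBot ℕ∞)
      ≤ (Cardinal.toENat (Algebra.trdeg F ψ.range) : WithBot ℕ∞) := by
        have := Cardinal.toENat.monotone' hw'.lift_cardinalMk_le_trdeg
        simpa [ENat.card] using this
    _ = ringKrullDim ψ.range := (ringKrullDim_eq_trdeg F _).symm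
    _ ≤ ringKrullDim A :=
        ringKrullDim_le_of_surjective ψ.rangeRestrict.toRingHom ψ.rangeRestrict_surjective

end KrullDimension

section GradedNakayama

variable {R A B : Type*} [CommRing R] [CommRing A] [Algebra R A] [CommRing B] [Algebra R B]
  (𝒜 : ℕ → Submodule R A) [GradedAlgebra 𝒜] {f : A →ₐ[R] B} {Θ : Set A}

open GradedAlgebra (proj)

/- Induction on the degree: multiplication by an element of `Θ` raises the degree, so the components
of degree `d` of the elements of `Ideal.span Θ` only involve components of smaller degree. -/
theorem eq_top_of_forall_exists_sub_mem_span (hf : Function.Surjective f)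
    (hker : (RingHom.ker f).IsHomogeneous 𝒜) (hΘ : ∀ θ ∈ Θ, ∃ d, 0 < d ∧ θ ∈ 𝒜 d)
    (N : Submodule (Algebra.adjoin R (f '' Θ)) B)
    (hN : ∀ x, ∃ u, (∀ d, f (proj 𝒜 d u) ∈ N) ∧ f (x - u) ∈ Ideal.span (f '' Θ)) : N = ⊤ := by
  have hproj : ∀ d x, f (proj 𝒜 d x) ∈ N := by
    intro d
    induction d using Nat.strong_induction_on with | _ d ih =>
    intro x
    obtain ⟨u, hu, hxu⟩ := hN x
    obtain ⟨v, hv, hvf⟩ : ∃ v ∈ Ideal.span Θ, f v = f (x - u) := by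
      rwa [← Ideal.map_span, Ideal.mem_map_iff_of_surjective f hf] at hxu
    have hsplit : f (proj 𝒜 d x) = f (proj 𝒜 d u) + f (proj 𝒜 d v) := by
      have hmem : x - u - v ∈ RingHom.ker f := by rw [RingHom.mem_ker, map_sub, hvf, sub_self]
      have h0 : f (proj 𝒜 d (x - u - v)) = 0 := hker d hmem
      rw [map_sub, map_sub, map_sub, map_sub] at h0
      linear_combination h0
    rw [hsplit]
    refine N.add_mem (hu d) ?_
    clear hvf hsplit
    induction hv using Submodule.closure_induction with
    | zero => simp
    | add v w _ _ hv hw => simpa using N.add_mem hv hw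
    | smul_mem c θ hθ =>
      obtain ⟨e, he, hθe⟩ := hΘ θ hθ
      rw [smul_eq_mul, GradedAlgebra.proj_apply, DirectSum.coe_decompose_mul_of_right_mem 𝒜 d hθe]
      split_ifs with hed
      · rw [map_mul, mul_comm]
        exact N.smul_mem ⟨f θ, Algebra.subset_adjoin ⟨θ, hθ, rfl⟩⟩ (ih (d - e) (by omega) c)
      · simp
  refine eq_top_iff.mpr fun y _ => ?_
  classical
  obtain ⟨x, rfl⟩ := hf y
  rw [← DirectSum.sum_support_decompose 𝒜 x, map_sum]
  exact N.sum_mem fun d _ => hproj d x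

theorem finite_adjoin_of_finite_quotient_span (hf : Function.Surjective f)
    (hker : (RingHom.ker f).IsHomogeneous 𝒜) (hΘ : ∀ θ ∈ Θ, ∃ d, 0 < d ∧ θ ∈ 𝒜 d)
    [Module.Finite R (B ⧸ Ideal.span (f '' Θ))] :
    Module.Finite (Algebra.adjoin R (f '' Θ)) B := by
  classical
  obtain ⟨k, y, hy⟩ := Module.Finite.exists_fin (R := R) (M := B ⧸ Ideal.span (f '' Θ))
  choose x hx using fun j => (Ideal.Quotient.mk_surjective.comp hf) (y j)
  let G : Set B := ⋃ j, (fun d => f (proj 𝒜 d (x j))) '' (DirectSum.decompose 𝒜 (x j)).support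
  have hG : G.Finite := Set.finite_iUnion fun j => (Finset.finite_toSet _).image _
  let N : Submodule (Algebra.adjoin R (f '' Θ)) B := Submodule.span _ G
  have hxN : ∀ j d, f (proj 𝒜 d (x j)) ∈ N := fun j d => by
    by_cases hd : d ∈ (DirectSum.decompose 𝒜 (x j)).support
    · exact Submodule.subset_span (Set.mem_iUnion.mpr ⟨j, d, hd, rfl⟩)
    · rw [GradedAlgebra.proj_apply, DFinsupp.notMem_support_iff.mp hd]
      simp
  have hN : N = ⊤ := by
    refine eq_top_of_forall_exists_sub_mem_span 𝒜 hf hker hΘ N fun a => ?_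
    obtain ⟨c, hc⟩ := (Submodule.mem_span_range_iff_exists_fun R).mp
      (hy ▸ Submodule.mem_top : Ideal.Quotient.mk _ (f a) ∈ Submodule.span R (Set.range y))
    refine ⟨∑ j, c j • x j, fun d => ?_, ?_⟩
    · simp only [map_sum, map_smul]
      exact N.sum_mem fun j _ => N.smul_of_tower_mem (c j) (hxN j d)
    · rw [← Ideal.Quotient.eq_zero_iff_mem, map_sub, map_sub, ← hc, sub_eq_zero, map_sum, map_sum]
      refine Finset.sum_congr rfl fun j _ => ?_
      rw [← hx, map_smul]
      rfl
  exact ⟨hN ▸ Submodule.fg_span hG⟩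

end GradedNakayama

theorem finite_of_isNilpotent_map_X {σ R B : Type*} [Finite σ] [CommRing R] [CommRing B]
    [Algebra R B] {f : MvPolynomial σ R →ₐ[R] B} (hf : Function.Surjective f)
    (hX : ∀ i, IsNilpotent (f (X i))) : Module.Finite R B := by
  have hadjoin : Algebra.adjoin R (Set.range (f ∘ X)) = ⊤ := by
    rw [Set.range_comp, ← AlgHom.map_adjoin, adjoin_range_X, Algebra.map_top,
      (AlgHom.range_eq_top f).mpr hf]
  have hint : ∀ y ∈ Set.range (f ∘ X), IsIntegral R y := by
    rintro _ ⟨i, rfl⟩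
    obtain ⟨k, hk⟩ := hX i
    exact .of_pow k.succ_pos (by simpa [pow_succ, hk] using isIntegral_zero)
  have hfg := fg_adjoin_of_finite (Set.finite_range (f ∘ X)) hint
  rw [hadjoin] at hfg
  exact ⟨hfg⟩

section MaximalMinors

variable {m n R : Type*} [Fintype m] [DecidableEq m] [CommRing R]

/-- The ideal `I_t(H)` generated by the maximal minors of a `t × n` matrix `H`. The columns of a
minor are an arbitrary function, so degenerate choices with repeated columns contribute `0`. -/
def maximalMinors (H : Matrix m n R) : Ideal R :=
  Ideal.span (Set.range fun g : m → n => (H.submatrix id g).det)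

theorem det_submatrix_mem_maximalMinors (H : Matrix m n R) (g : m → n) :
    (H.submatrix id g).det ∈ maximalMinors H :=
  Ideal.subset_span ⟨g, rfl⟩

theorem maximalMinors_map {S : Type*} [CommRing S] (f : R →+* S) (H : Matrix m n R) :
    maximalMinors (H.map f) = (maximalMinors H).map f := by
  rw [maximalMinors, maximalMinors, Ideal.map_span, ← Set.range_comp]
  congr! with g
  simp [RingHom.map_det, submatrix_map]

theorem isHomogeneous_det {σ : Type*} {M : Matrix m m (MvPolynomial σ R)} {d : ℕ}
    (hM : ∀ i j, (M i j).IsHomogeneous d) : M.det.IsHomogeneous (Fintype.card m * d) := by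
  rw [det_apply]
  refine IsHomogeneous.sum _ _ _ fun τ _ => ?_
  have hprod : (∏ i, M (τ i) i).IsHomogeneous (∑ _i : m, d) :=
    IsHomogeneous.prod _ _ _ fun i _ => hM _ _
  rcases Int.units_eq_one_or (Equiv.Perm.sign τ) with hτ | hτ
  · simpa [hτ] using hprod
  · simpa [hτ] using hprod.neg

attribute [local instance] MvPolynomial.gradedAlgebra in
theorem isHomogeneous_maximalMinors {σ : Type*} {H : Matrix m n (MvPolynomial σ R)} {d : ℕ}
    (hH : ∀ i j, (H i j).IsHomogeneous d) :
    (maximalMinors H).IsHomogeneous (homogeneousSubmodule σ R) := by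
  refine Ideal.homogeneous_span _ _ ?_
  rintro _ ⟨g, rfl⟩
  exact ⟨_, isHomogeneous_det fun i j => hH i (g j)⟩

end MaximalMinors

section Hankel

variable {R : Type*}

/-- The `t × n` Hankel matrix of the sequence `z`, with entry `z (a + b)` in position `(a, b)`.
Indices start at `0`, so that `z k` is the entry `x_{k+1}` of the usual notation. -/
def hankel (t n : ℕ) (z : ℕ → R) : Matrix (Fin t) (Fin n) R :=
  of fun a b => z (a + b)

theorem hankel_map {S : Type*} (t n : ℕ) (z : ℕ → R) (f : R → S) :
    (hankel t n z).map f = hankel t n (f ∘ z) := rfl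

variable [CommRing R]

/- If `z j = 0` for `j < k`, the minor on the columns `k, k - 1, …, k - s` is triangular with
diagonal entries `z k`. -/
theorem eq_zero_of_maximalMinors_hankel_eq_bot [IsReduced R] {s n : ℕ} {z : ℕ → R}
    (hz : maximalMinors (hankel (s + 1) n z) = ⊥) (hs : ∀ k < s, z k = 0) :
    ∀ k < n, z k = 0 := by
  intro k
  induction k using Nat.strong_induction_on with | _ k ih =>
  intro hk
  by_cases hks : k < s
  · exact hs k hks
  let g : Fin (s + 1) → Fin n := fun b => ⟨k - b, by omega⟩
  have htri : ((hankel (s + 1) n z).submatrix id g).IsLowerTriangular := fun a b hab => by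
    have hab' : (a : ℕ) < b := hab
    exact ih _ (by simp only [g, id]; omega) (by simp only [g, id]; omega)
  have hdiag : ∀ a, (hankel (s + 1) n z).submatrix id g a a = z k := fun a => by
    simp only [hankel, g, submatrix_apply, of_apply, id]
    congr 1
    omega
  have hdet := det_submatrix_mem_maximalMinors (hankel (s + 1) n z) g
  rw [hz, Ideal.mem_bot, det_of_isLowerTriangular _ htri,
    Finset.prod_congr rfl fun a _ => hdiag a] at hdet
  simpa using hdet

theorem isNilpotent_of_maximalMinors_hankel_eq_bot {s n : ℕ} {z : ℕ → R}
    (hz : maximalMinors (hankel (s + 1) n z) = ⊥) (hs : ∀ k < s, IsNilpotent (z k)) {k : ℕ}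
    (hk : k < n) : IsNilpotent (z k) := by
  let π := Ideal.Quotient.mk (nilradical R)
  have : IsReduced (R ⧸ nilradical R) :=
    (Ideal.isRadical_iff_quotient_reduced _).mp (Ideal.radical_isRadical _)
  have hπ : ∀ k, π (z k) = 0 ↔ IsNilpotent (z k) := fun k => by
    rw [Ideal.Quotient.eq_zero_iff_mem, mem_nilradical]
  rw [← hπ]
  refine eq_zero_of_maximalMinors_hankel_eq_bot (z := π ∘ z) ?_ (fun j hj => (hπ j).mpr (hs j hj))
    k hk
  rw [← hankel_map, maximalMinors_map, hz, Ideal.map_bot]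

theorem maximalMinors_hankel_eq_bot_of_isSolution {E : LinearRecurrence R} {z : ℕ → R}
    (hz : E.IsSolution z) (n : ℕ) : maximalMinors (hankel (E.order + 1) n z) = ⊥ := by
  rw [maximalMinors, Ideal.span_eq_bot]
  rintro _ ⟨g, rfl⟩
  let M := (hankel (E.order + 1) n z).submatrix id g
  have hker : Fin.snoc E.coeffs (-1) ᵥ* M = 0 := by
    ext b
    simp [M, vecMul, dotProduct, Fin.sum_univ_castSucc, hankel, add_comm _ (g b : ℕ), hz (g b)]
  have hdet : Fin.snoc E.coeffs (-1) ᵥ* (M * M.adjugate) = 0 := by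
    rw [← vecMul_vecMul, hker, zero_vecMul]
  simpa [mul_adjugate, vecMul_smul] using congrFun hdet (Fin.last _)

end Hankel

section GenericHankel

theorem exists_isSolution_of_det_hankel_ne_zero {K : Type*} [Field K] {s : ℕ} {y : ℕ → K}
    (hy : (hankel s s y).det ≠ 0) :
    ∃ (c : Fin s → K) (z : ℕ → K),
      (⟨s, c⟩ : LinearRecurrence K).IsSolution z ∧ ∀ k < 2 * s, z k = y k := by
  let c : Fin s → K := (hankel s s y)⁻¹ *ᵥ fun a => y (a + s)
  have hc : hankel s s y *ᵥ c = fun a : Fin s => y (a + s) := by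
    rw [mulVec_mulVec, mul_nonsing_inv _ hy.isUnit, one_mulVec]
  let E : LinearRecurrence K := ⟨s, c⟩
  let z := E.mkSol fun i => y i
  have hz : E.IsSolution z := E.is_sol_mkSol _
  refine ⟨c, z, hz, fun k => ?_⟩
  induction k using Nat.strong_induction_on with | _ k ih =>
  intro hk
  obtain hks | hsk := lt_or_ge k s
  · exact E.mkSol_eq_init _ ⟨k, hks⟩
  obtain ⟨a, rfl⟩ := Nat.exists_eq_add_of_le' hsk
  calc z (a + s) = ∑ j : Fin s, c j * z (a + j) := hz a
    _ = ∑ j : Fin s, y (a + j) * c j :=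
      Finset.sum_congr rfl fun j _ => by rw [mul_comm, ih _ (by omega) (by omega)]
    _ = y (a + s) := congrFun hc ⟨a, by omega⟩

theorem hankel_antidiagonal (R : Type*) [Zero R] [One R] (s : ℕ) :
    hankel s s (fun k => if k + 1 = s then (1 : R) else 0) =
      (Fin.revPerm (n := s)).permMatrix R := by
  ext a b
  have hrev : (a + b + 1 : ℕ) = s ↔ s - (a + 1) = (b : ℕ) := by omega
  simp [hankel, PEquiv.toMatrix_apply, Fin.ext_iff, Fin.val_rev, hrev]

variable (R : Type*) [CommRing R] (m : ℕ)

/-- The sequence of the variables of `R[x_0, …, x_{m-1}]`, extended by zero. Its Hankel matrices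
of size `t × n` with `t + n ≤ m + 1` are the generic ones. -/
noncomputable def genericSeq (k : ℕ) : MvPolynomial (Fin m) R :=
  if h : k < m then X ⟨k, h⟩ else 0

variable {m} in
theorem genericSeq_of_lt {k : ℕ} (hk : k < m) : genericSeq R m k = X ⟨k, hk⟩ := dif_pos hk

theorem isHomogeneous_genericSeq (k : ℕ) : (genericSeq R m k).IsHomogeneous 1 := by
  rw [genericSeq]
  split_ifs
  exacts [isHomogeneous_X _ _, isHomogeneous_zero _ _ _]

variable {R m}

theorem hankel_genericSeq_map_aeval {A : Type*} [CommRing A] [Algebra R A] {t n : ℕ}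
    (h : t + n ≤ m + 1) (z : ℕ → A) :
    (hankel t n (genericSeq R m)).map (aeval fun i : Fin m => z i) = hankel t n z := by
  ext a b
  simp [hankel, genericSeq_of_lt R (show (a + b : ℕ) < m by omega)]

theorem det_hankel_genericSeq_ne_zero [Nontrivial R] {s : ℕ} (h : 2 * s ≤ m + 1) :
    (hankel s s (genericSeq R m)).det ≠ 0 := by
  intro hdet
  have hmap := AlgHom.map_det (aeval fun i : Fin m => if (i : ℕ) + 1 = s then (1 : R) else 0)
    (hankel s s (genericSeq R m))
  have hspec := hankel_genericSeq_map_aeval (R := R) (m := m) (t := s) (n := s) (by omega)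
    fun k => if k + 1 = s then (1 : R) else 0
  rw [hdet, map_zero, AlgHom.mapMatrix_apply, hspec, hankel_antidiagonal, det_permutation] at hmap
  exact ((Equiv.Perm.sign (Fin.revPerm (n := s))).isUnit.map (Int.castRingHom R)).ne_zero hmap.symm

end GenericHankel

section HankelRing

/-- The ideal `I_t(H)` of the generic `t × n` Hankel matrix `H` in the variables `x_0, …, x_{m-1}`.
The case of interest is `m = n + t - 1`. -/
noncomputable def hankelIdeal (R : Type*) [CommRing R] (t n m : ℕ) :
    Ideal (MvPolynomial (Fin m) R) :=
  maximalMinors (hankel t n (genericSeq R m))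

/-- The parameters `x_i` with `i < s` or `n ≤ i`; for the ideal of `t`-minors one takes
`s = t - 1`. -/
def hankelParams (R : Type*) [CommRing R] (s n m : ℕ) : Set (MvPolynomial (Fin m) R) :=
  {p | ∃ i : Fin m, ((i : ℕ) < s ∨ n ≤ (i : ℕ)) ∧ p = X i}

attribute [local instance] MvPolynomial.gradedAlgebra in
theorem isHomogeneous_hankelIdeal (R : Type*) [CommRing R] (t n m : ℕ) :
    (hankelIdeal R t n m).IsHomogeneous (homogeneousSubmodule (Fin m) R) :=
  isHomogeneous_maximalMinors fun _ _ => isHomogeneous_genericSeq R m _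

theorem ncard_hankelParams_le (R : Type*) [CommRing R] (s n : ℕ) {m : ℕ} (h : m ≤ n + s) :
    (hankelParams R s n m).ncard ≤ 2 * s := by
  have hsub : hankelParams R s n m ⊆
      genericSeq R m '' ((Finset.range s ∪ Finset.Ico n (n + s) : Finset ℕ) : Set ℕ) := by
    rintro _ ⟨i, hi, rfl⟩
    exact ⟨i, by simpa using by omega, genericSeq_of_lt R i.2⟩
  calc (hankelParams R s n m).ncard
      ≤ (Finset.range s ∪ Finset.Ico n (n + s)).card := by
        rw [← Set.ncard_coe_finset]
        exact (Set.ncard_le_ncard hsub).trans (Set.ncard_image_le (Finset.finite_toSet _))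
    _ ≤ 2 * s := (Finset.card_union_le _ _).trans (by simp [two_mul])

variable {R : Type*} [CommRing R] {s n m : ℕ}

theorem finite_hankelParams : (hankelParams R s n m).Finite :=
  (Set.finite_range (X : Fin m → MvPolynomial (Fin m) R)).subset fun _ ⟨i, _, hi⟩ => ⟨i, hi.symm⟩

theorem finite_quotient_span_hankelParams {B : Type*} [CommRing B] [Algebra R B]
    {f : MvPolynomial (Fin m) R →ₐ[R] B} (hf : Function.Surjective f)
    (hI : hankelIdeal R (s + 1) n m ≤ RingHom.ker f.toRingHom) :
    Module.Finite R (B ⧸ Ideal.span (f '' hankelParams R s n m)) := by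
  let q := (Ideal.Quotient.mkₐ R (Ideal.span (f '' hankelParams R s n m))).comp f
  have hparam : ∀ i : Fin m, (i : ℕ) < s ∨ n ≤ (i : ℕ) → q (X i) = 0 := fun i hi =>
    Ideal.Quotient.eq_zero_iff_mem.mpr (Ideal.subset_span ⟨X i, ⟨i, hi, rfl⟩, rfl⟩)
  have hminors : maximalMinors (hankel (s + 1) n (q ∘ genericSeq R m)) = ⊥ := by
    rw [← hankel_map]
    refine (maximalMinors_map q.toRingHom _).trans ?_
    refine (Ideal.map_eq_bot_iff_le_ker _).mpr fun p hp => ?_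
    exact (congrArg (Ideal.Quotient.mk _) (hI hp)).trans (map_zero _)
  suffices hnil : ∀ i, IsNilpotent (q (X i)) from
    finite_of_isNilpotent_map_X (f := q) (Ideal.Quotient.mk_surjective.comp hf) hnil
  intro i
  obtain hin | hni := lt_or_ge (i : ℕ) n
  · rw [← genericSeq_of_lt R i.2]
    refine isNilpotent_of_maximalMinors_hankel_eq_bot hminors (fun k hk => ?_) hin
    by_cases hkm : k < m
    · simp [genericSeq_of_lt R hkm, hparam ⟨k, hkm⟩ (.inl hk)]
    · simp [genericSeq, hkm]
  · simp [hparam i (.inr hni)]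

theorem nontrivial_quotient_span_hankelParams [Nontrivial R] {B : Type*} [CommRing B]
    [Algebra R B] {f : MvPolynomial (Fin m) R →ₐ[R] B} (hf : Function.Surjective f)
    (hI : RingHom.ker f ≤ hankelIdeal R (s + 1) n m) :
    Nontrivial (B ⧸ Ideal.span (f '' hankelParams R s n m)) := by
  have hker : hankelIdeal R (s + 1) n m ≤ RingHom.ker (aeval (0 : Fin m → R)).toRingHom := by
    refine Ideal.span_le.mpr ?_
    rintro _ ⟨g, rfl⟩
    rw [SetLike.mem_coe, RingHom.mem_ker, RingHom.map_det]
    refine det_eq_zero_of_row_eq_zero 0 fun b => ?_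
    simp [hankel, genericSeq, apply_dite]
  let ε := f.liftOfSurjective hf (aeval (0 : Fin m → R)) (hI.trans hker)
  have hε : Ideal.span (f '' hankelParams R s n m) ≤ RingHom.ker ε := by
    refine Ideal.span_le.mpr ?_
    rintro _ ⟨_, ⟨i, -, rfl⟩, rfl⟩
    exact (f.liftOfSurjective_apply hf _ _ (X i)).trans (by simp)
  exact Ideal.Quotient.nontrivial_iff.mpr (ne_top_of_le_ne_top (RingHom.ker_ne_top ε) hε)

variable {F B : Type*} [Field F] [CommRing B] [Algebra F B] {f : MvPolynomial (Fin m) F →ₐ[F] B}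

theorem isArtinianRing_quotient_span_hankelParams (hf : Function.Surjective f)
    (hI : hankelIdeal F (s + 1) n m ≤ RingHom.ker f) :
    IsArtinianRing (B ⧸ Ideal.span (f '' hankelParams F s n m)) := by
  have := finite_quotient_span_hankelParams hf hI
  exact IsArtinianRing.of_finite F _

theorem ringKrullDim_quotient_span_hankelParams (hf : Function.Surjective f)
    (hI : RingHom.ker f = hankelIdeal F (s + 1) n m) :
    ringKrullDim (B ⧸ Ideal.span (f '' hankelParams F s n m)) = 0 := by
  have := isArtinianRing_quotient_span_hankelParams hf hI.ge
  have := nontrivial_quotient_span_hankelParams hf hI.le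
  exact ringKrullDim_eq_zero_of_isArtinianRing _

attribute [local instance] MvPolynomial.gradedAlgebra in
theorem ringKrullDim_le_of_ker_eq_hankelIdeal (hf : Function.Surjective f)
    (hI : RingHom.ker f = hankelIdeal F (s + 1) n m) (h : m ≤ n + s) :
    ringKrullDim B ≤ (2 * s : ℕ) := by
  have hker : (RingHom.ker f).IsHomogeneous (homogeneousSubmodule (Fin m) F) :=
    hI ▸ isHomogeneous_hankelIdeal F (s + 1) n m
  have hpos : ∀ θ ∈ hankelParams F s n m, ∃ d, 0 < d ∧ θ ∈ homogeneousSubmodule (Fin m) F d := by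
    rintro _ ⟨i, -, rfl⟩
    exact ⟨1, one_pos, isHomogeneous_X _ _⟩
  have := finite_quotient_span_hankelParams hf hI.ge
  have := finite_adjoin_of_finite_quotient_span _ hf hker hpos
  calc ringKrullDim B ≤ (f '' hankelParams F s n m).ncard :=
      ringKrullDim_le_ncard_of_isIntegral_adjoin (F := F) (finite_hankelParams.image f)
    _ ≤ (2 * s : ℕ) := by
      exact_mod_cast (Set.ncard_image_le finite_hankelParams).trans (ncard_hankelParams_le F s n h)

theorem le_ringKrullDim_of_ker_le_hankelIdeal (hf : Function.Surjective f)
    (hI : RingHom.ker f ≤ hankelIdeal F (s + 1) n m) (hs : 2 * s ≤ m) (h : n + s ≤ m) :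
    (2 * s : ℕ) ≤ ringKrullDim B := by
  let P := MvPolynomial (Fin (2 * s)) F
  let K := FractionRing P
  have hinj : Function.Injective (algebraMap P K) := IsFractionRing.injective P K
  have hdet : (hankel s s (algebraMap P K ∘ genericSeq F (2 * s))).det ≠ 0 := by
    rw [← hankel_map, ← RingHom.mapMatrix_apply, ← RingHom.map_det]
    exact (map_ne_zero_iff _ hinj).mpr (det_hankel_genericSeq_ne_zero (by omega))
  obtain ⟨c, z, hz, hzX⟩ := exists_isSolution_of_det_hankel_ne_zero hdet
  let φ : MvPolynomial (Fin m) F →ₐ[F] K := aeval fun i : Fin m => z i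
  have hφ : hankelIdeal F (s + 1) n m ≤ RingHom.ker φ.toRingHom := by
    rw [← Ideal.map_eq_bot_iff_le_ker, hankelIdeal, ← maximalMinors_map]
    exact (congrArg maximalMinors (hankel_genericSeq_map_aeval (by omega) z)).trans
      (maximalMinors_hankel_eq_bot_of_isSolution hz n)
  have hindep : AlgebraicIndependent F fun i : Fin (2 * s) => z i := by
    convert (algebraicIndependent_X (Fin (2 * s)) F).map' (f := IsScalarTower.toAlgHom F P K) hinj
      using 2 with i
    rw [hzX i i.2, Function.comp_apply, genericSeq_of_lt F i.2]
    rfl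
  have : Algebra.FiniteType F B := .of_surjective f hf
  have := le_ringKrullDim_of_algebraicIndependent (f.liftOfSurjective hf φ (hI.trans hφ))
    (w := fun i : Fin (2 * s) => f (X (i.castLE hs)))
    (by
      convert hindep using 2 with i
      exact (f.liftOfSurjective_apply hf φ _ _).trans (aeval_X _ _))
  simpa using this

end HankelRing

/-- For the `t×n` Hankel determinantal ring `R = F[x_1,...,x_{n+t-1}]/I_t(H)` (with `t ≤ n`),
the images of `x_1,...,x_{t-1},x_{n+1},...,x_{n+t-1}` form a homogeneous system of parameters:
the quotient of `R` by the ideal they generate is Artinian of Krull dimension `0`, and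
`dim R = 2t-2`. -/
theorem hankel_hsop (F : Type*) [Field F] (t n : ℕ) (ht : 2 ≤ t) (htn : t ≤ n)
    (H : Matrix (Fin t) (Fin n) (MvPolynomial (Fin (n + t - 1)) F))
    (hH : ∀ a b, H a b = X ⟨(a : ℕ) + (b : ℕ), by have := a.2; have := b.2; omega⟩)
    (I : Ideal (MvPolynomial (Fin (n + t - 1)) F))
    (hI : I = Ideal.span (Set.range fun g : Fin t → Fin n => (H.submatrix id g).det))
    (a : Ideal (MvPolynomial (Fin (n + t - 1)) F ⧸ I))
    (ha : a = Ideal.span ((fun p => Ideal.Quotient.mk I p) ''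
      {p | ∃ i : Fin (n + t - 1), ((i : ℕ) < t - 1 ∨ n ≤ (i : ℕ)) ∧ p = X i})) :
    IsArtinianRing ((MvPolynomial (Fin (n + t - 1)) F ⧸ I) ⧸ a) ∧
    ringKrullDim ((MvPolynomial (Fin (n + t - 1)) F ⧸ I) ⧸ a) = 0 ∧
    ringKrullDim (MvPolynomial (Fin (n + t - 1)) F ⧸ I) = ((2 * t - 2 : ℕ) : WithBot (WithTop ℕ)) := by
  obtain ⟨s, rfl⟩ : ∃ s, t = s + 1 := ⟨t - 1, by omega⟩
  obtain rfl : H = hankel (s + 1) n (genericSeq F _) := by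
    ext1 a b
    rw [hH]
    exact (genericSeq_of_lt F _).symm
  obtain rfl : I = hankelIdeal F (s + 1) n _ := hI
  have hf := Ideal.Quotient.mkₐ_surjective F (hankelIdeal F (s + 1) n (n + (s + 1) - 1))
  have hker := Ideal.Quotient.mkₐ_ker F (hankelIdeal F (s + 1) n (n + (s + 1) - 1))
  obtain rfl : a = Ideal.span (Ideal.Quotient.mkₐ F (hankelIdeal F (s + 1) n _) ''
      hankelParams F s n _) := ha
  exact ⟨isArtinianRing_quotient_span_hankelParams hf hker.ge,
    ringKrullDim_quotient_span_hankelParams hf hker,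
    (ringKrullDim_le_of_ker_eq_hankelIdeal hf hker (by omega)).antisymm
      (le_ringKrullDim_of_ker_le_hankelIdeal hf hker.le (by omega) (by omega))⟩
end
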